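/- arXiv:math/0412143 — 2 statements merged into one kernel-verified Lean document; each statement's English description precedes it below -/
import Mathlib

section
/- There exists a unique ℂ-algebra homomorphism Δ : A(q) → A(q) ⊗_ℂ A(q) satisfying Δ(a) = a ⊗ a and Δ(x) = x ⊗ (∑_{y=0}^{n−1} q^y 1_y) + 1 ⊗ (1 − 1_0)x + a^{n−1} ⊗ 1_0 x, and a unique ℂ-algebra homomorphism ε : A(q) → ℂ with ε(a) = 1 and ε(x) = 0; moreover these satisfy the counit axioms: (ε ⊗ id) ∘ Δ = id and (id ⊗ ε) ∘ Δ = id (under the canonical identifications ℂ ⊗ A(q) ≅ A(q) ≅ A(q) ⊗ ℂ). -/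
noncomputable section

open scoped TensorProduct

/-- The two generators. -/
inductive AqGen : Type
  | a : AqGen
  | x : AqGen

open FreeAlgebra

/-- The defining relations of `A(q)`. -/
inductive AqRel (n : ℕ) (q : ℂ) : FreeAlgebra ℂ AqGen → FreeAlgebra ℂ AqGen → Prop
  | comm : AqRel n q (ι ℂ AqGen.a * ι ℂ AqGen.x) (q ^ n • (ι ℂ AqGen.x * ι ℂ AqGen.a))
  | aOrd : AqRel n q ((ι ℂ AqGen.a) ^ n) 1
  | xNil : AqRel n q ((ι ℂ AqGen.x) ^ (n ^ 2)) 0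

/-- The algebra `A(q)`. -/
abbrev Aq (n : ℕ) (q : ℂ) : Type := RingQuot (AqRel n q)

/-- The image of the generator `a` in `A(q)`. -/
def Aq.a (n : ℕ) (q : ℂ) : Aq n q := RingQuot.mkAlgHom ℂ (AqRel n q) (ι ℂ AqGen.a)

/-- The image of the generator `x` in `A(q)`. -/
def Aq.x (n : ℕ) (q : ℂ) : Aq n q := RingQuot.mkAlgHom ℂ (AqRel n q) (ι ℂ AqGen.x)

/-- The primitive idempotents `1_i = (1/n) ∑_{k} q^{-nik} a^k` of `ℂ[a] ⊆ A(q)`. -/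
def Aq.e (n : ℕ) (q : ℂ) (i : ℕ) : Aq n q :=
  (n : ℂ)⁻¹ • ∑ k ∈ Finset.range n, (q⁻¹ ^ (n * i * k)) • (Aq.a n q ^ k)

/-!
Write `S = ∑ q ^ y • 1_y` and `W = 1 ⊗ (1 - 1_0) + a⁻¹ ⊗ 1_0`, so that the prescribed value of `Δ`
on `x` is `U + V` with `U = x ⊗ S` and `V = W * (1 ⊗ x)`. Moving `x` past `S`, and moving `x ⊗ 1`
past `W`, produce the same correction factor `P = 1 + (q ^ n - 1) • 1_0`:
`q • (x * S) = S * P * x` and `(x ⊗ 1) * W = W * (1 ⊗ P) * (x ⊗ 1)`.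
Hence `U * V = q • (V * U)`. As `q` has order `n ^ 2`, the `q`-binomial theorem collapses to
`(U + V) ^ (n ^ 2) = U ^ (n ^ 2) + V ^ (n ^ 2)`, and both powers vanish because `x ^ (n ^ 2) = 0`:
moving `1 ⊗ x` past `W` only shifts the index of the idempotents, so `V ^ k` is a multiple of
`(1 ⊗ x) ^ k`.
-/

/-- The Gaussian binomial coefficient `[m choose k]_q`, defined by its `q`-Pascal recursion so that
it makes sense in every commutative semiring. -/
def gaussBinom {K : Type*} [CommSemiring K] (q : K) : ℕ → ℕ → K
  | _, 0 => 1
  | 0, _ + 1 => 0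
  | m + 1, k + 1 => gaussBinom q m k + q ^ (k + 1) * gaussBinom q m (k + 1)

section GaussBinom

variable {K : Type*}

lemma gaussBinom_zero_right [CommSemiring K] (q : K) (m : ℕ) : gaussBinom q m 0 = 1 := by
  cases m <;> rfl

lemma gaussBinom_succ_succ [CommSemiring K] (q : K) (m k : ℕ) :
    gaussBinom q (m + 1) (k + 1) = gaussBinom q m k + q ^ (k + 1) * gaussBinom q m (k + 1) :=
  rfl

lemma gaussBinom_eq_zero_of_lt [CommSemiring K] (q : K) {m k : ℕ} (h : m < k) :
    gaussBinom q m k = 0 := by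
  induction m generalizing k with
  | zero => obtain ⟨k, rfl⟩ := Nat.exists_eq_succ_of_ne_zero h.ne'; rfl
  | succ m ih =>
    obtain ⟨k, rfl⟩ := Nat.exists_eq_succ_of_ne_zero h.ne_bot
    rw [Nat.succ_eq_add_one, gaussBinom_succ_succ, ih (by omega), ih (by omega), mul_zero, add_zero]

lemma gaussBinom_self [CommSemiring K] (q : K) (m : ℕ) : gaussBinom q m m = 1 := by
  induction m with
  | zero => rfl
  | succ m ih =>
    rw [gaussBinom_succ_succ, ih, gaussBinom_eq_zero_of_lt q m.lt_succ_self, mul_zero, add_zero]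

lemma one_sub_pow_mul_gaussBinom_succ_succ [CommRing K] (q : K) (m k : ℕ) :
    (1 - q ^ (k + 1)) * gaussBinom q (m + 1) (k + 1) = (1 - q ^ (m + 1)) * gaussBinom q m k := by
  induction m generalizing k with
  | zero =>
    rw [gaussBinom_succ_succ, gaussBinom_eq_zero_of_lt q k.succ_pos]
    cases k with
    | zero => ring
    | succ k => rw [gaussBinom_eq_zero_of_lt q k.succ_pos]; ring
  | succ m ih =>
    have upper := ih k
    rw [gaussBinom_succ_succ q (m + 1)]
    cases k with
    | zero =>
      rw [gaussBinom_zero_right] at upper ⊢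
      linear_combination q * upper
    | succ k =>
      linear_combination q ^ (k + 2) * upper + q * ih k
        - q * (1 - q ^ (m + 1)) * gaussBinom_succ_succ q m k

lemma gaussBinom_eq_zero_of_isPrimitiveRoot [CommRing K] [IsDomain K] {q : K} {N k : ℕ}
    (hq : IsPrimitiveRoot q (N + 1)) (hk : k < N) : gaussBinom q (N + 1) (k + 1) = 0 := by
  have absorption := one_sub_pow_mul_gaussBinom_succ_succ q N k
  rw [hq.pow_eq_one, sub_self, zero_mul] at absorption
  have pow_ne_one : q ^ (k + 1) ≠ 1 := hq.pow_ne_one_of_pos_of_lt k.succ_ne_zero (by omega)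
  exact (mul_eq_zero.1 absorption).resolve_left (sub_ne_zero.2 pow_ne_one.symm)

end GaussBinom

section QCommuting

variable {K R : Type*}

lemma add_pow_eq_sum_gaussBinom [CommSemiring K] [Semiring R] [Algebra K R] {q : K} {u v : R}
    (h : SemiconjBy u v (q • v)) (m : ℕ) :
    (u + v) ^ m = ∑ k ∈ Finset.range (m + 1), gaussBinom q m k • (v ^ k * u ^ (m - k)) := by
  induction m with
  | zero => simp [gaussBinom_zero_right]
  | succ m ih =>
    have u_mul : u * ∑ k ∈ Finset.range (m + 1), gaussBinom q m k • (v ^ k * u ^ (m - k)) =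
        ∑ k ∈ Finset.range (m + 2), (q ^ k * gaussBinom q m k) • (v ^ k * u ^ (m + 1 - k)) := by
      rw [Finset.sum_range_succ _ (m + 1), gaussBinom_eq_zero_of_lt q m.lt_succ_self, mul_zero,
        zero_smul, add_zero, Finset.mul_sum]
      refine Finset.sum_congr rfl fun k hk => ?_
      rw [mul_smul_comm, ← mul_assoc, (h.pow_right k).eq, smul_pow, smul_mul_assoc, smul_mul_assoc,
        smul_smul, mul_assoc, ← pow_succ', mul_comm (q ^ k),
        Nat.sub_add_comm (Finset.mem_range_succ_iff.1 hk)]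
    have v_mul : v * ∑ k ∈ Finset.range (m + 1), gaussBinom q m k • (v ^ k * u ^ (m - k)) =
        ∑ k ∈ Finset.range (m + 1),
          gaussBinom q m k • (v ^ (k + 1) * u ^ (m + 1 - (k + 1))) := by
      simp only [Finset.mul_sum, mul_smul_comm, ← mul_assoc, ← pow_succ', Nat.add_sub_add_right]
    rw [pow_succ', ih, add_mul, u_mul, v_mul, Finset.sum_range_succ' _ (m + 1),
      Finset.sum_range_succ' _ (m + 1), add_right_comm, ← Finset.sum_add_distrib]
    simp only [← add_smul, gaussBinom_succ_succ, gaussBinom_zero_right, pow_zero, mul_one,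
      add_comm (gaussBinom q m _)]

lemma add_pow_of_isPrimitiveRoot [CommRing K] [IsDomain K] [Semiring R] [Algebra K R] {q : K}
    {N : ℕ} [NeZero N] (hq : IsPrimitiveRoot q N) {u v : R} (h : SemiconjBy u v (q • v)) :
    (u + v) ^ N = u ^ N + v ^ N := by
  obtain ⟨M, rfl⟩ := Nat.exists_eq_succ_of_ne_zero (NeZero.ne N)
  rw [add_pow_eq_sum_gaussBinom h, Finset.sum_range_succ, Finset.sum_range_succ',
    Finset.sum_eq_zero fun k hk => ?_]
  · simp [gaussBinom_zero_right, gaussBinom_self]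
  · rw [gaussBinom_eq_zero_of_isPrimitiveRoot hq (Finset.mem_range.1 hk), zero_smul]

lemma mul_pow_eq_prod_mul_pow {M : Type*} [Monoid M] {t : M} {w : ℕ → M}
    (h : ∀ j, SemiconjBy t (w j) (w (j + 1))) (k : ℕ) :
    (w 0 * t) ^ k = ((List.range k).map w).prod * t ^ k := by
  have pow_semiconj (k : ℕ) : SemiconjBy (t ^ k) (w 0) (w k) := by
    induction k with
    | zero => rw [pow_zero]; exact SemiconjBy.one_left _
    | succ k ih => rw [pow_succ']; exact (h k).mul_left ih
  induction k with
  | zero => simp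
  | succ k ih =>
    rw [pow_succ, ih, mul_assoc, ← mul_assoc (t ^ k), (pow_semiconj k).eq, List.range_succ]
    simp [mul_assoc, pow_succ]

lemma semiconjBy_swap_inv_smul [Field K] [Semiring R] [Algebra K R] {ζ : K} (hζ : ζ ≠ 0) {a x : R}
    (h : SemiconjBy a x (ζ • x)) : SemiconjBy x a (ζ⁻¹ • a) := by
  rw [SemiconjBy, smul_mul_assoc, h.eq, smul_mul_assoc, inv_smul_smul₀ hζ]

lemma semiconjBy_pow_pred_smul [Field K] [Semiring R] [Algebra K R] {ζ : K} {n : ℕ} [NeZero n]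
    (hζ : ζ ^ n = 1) {a x : R} (h : SemiconjBy a x (ζ • x)) :
    SemiconjBy x (a ^ (n - 1)) (ζ • a ^ (n - 1)) := by
  have inv_pow_pred : ζ⁻¹ ^ (n - 1) = ζ := by
    rw [inv_pow, inv_eq_iff_eq_inv]
    exact eq_inv_of_mul_eq_one_left (by rw [pow_sub_one_mul (NeZero.ne n), hζ])
  have ζ_ne_zero : ζ ≠ 0 := (IsUnit.of_pow_eq_one hζ (NeZero.ne n)).ne_zero
  simpa only [smul_pow, inv_pow_pred] using (semiconjBy_swap_inv_smul ζ_ne_zero h).pow_right (n - 1)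

end QCommuting

/-- For `a ^ n = 1` and `ζ` a primitive `n`-th root of unity, the projection
`(1/n) ∑ ζ ^ (-ik) a ^ k` onto the `ζ ^ i`-eigenspace of `a`; with `ζ = q ^ n` it is the paper's
`1_i`. The index ranges over `ℕ` and matters only modulo `n`. -/
def cyclicIdempotent {K R : Type*} [Field K] [Semiring R] [Algebra K R]
    (ζ : K) (n : ℕ) (a : R) (i : ℕ) : R :=
  (n : K)⁻¹ • ∑ k ∈ Finset.range n, ζ⁻¹ ^ (i * k) • a ^ k

/-- The element `∑ q ^ y 1_y`, acting as `q ^ y` on the `q ^ (n * y)`-eigenspace of `a` for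
`0 ≤ y < n`: an `n`-th root of `a`. -/
def cyclicRoot {K R : Type*} [Field K] [Semiring R] [Algebra K R] (q : K) (n : ℕ) (a : R) : R :=
  ∑ y ∈ Finset.range n, q ^ y • cyclicIdempotent (q ^ n) n a y

section CyclicIdempotent

variable {K R : Type*} [Field K] [Semiring R] [Algebra K R] {ζ q : K} {n : ℕ} {a b v x : R}

lemma map_cyclicIdempotent {R' : Type*} [Semiring R'] [Algebra K R'] (f : R →ₐ[K] R') (i : ℕ) :
    f (cyclicIdempotent ζ n a i) = cyclicIdempotent ζ n (f a) i := by
  simp [cyclicIdempotent]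

lemma map_cyclicRoot {R' : Type*} [Semiring R'] [Algebra K R'] (f : R →ₐ[K] R') :
    f (cyclicRoot q n a) = cyclicRoot q n (f a) := by
  simp [cyclicRoot, map_cyclicIdempotent]

lemma commute_cyclicIdempotent (h : Commute b a) (i : ℕ) :
    Commute b (cyclicIdempotent ζ n a i) :=
  (Commute.sum_right _ _ _ fun k _ => (h.pow_right k).smul_right _).smul_right _

lemma commute_cyclicRoot (h : Commute b a) : Commute b (cyclicRoot q n a) :=
  Commute.sum_right _ _ _ fun y _ => (commute_cyclicIdempotent h y).smul_right _

lemma cyclicIdempotent_self (hζ : ζ ^ n = 1) :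
    cyclicIdempotent ζ n a n = cyclicIdempotent ζ n a 0 := by
  simp [cyclicIdempotent, pow_mul, hζ]

lemma mul_cyclicIdempotent_zero (ha : a ^ n = 1) :
    a * cyclicIdempotent ζ n a 0 = cyclicIdempotent ζ n a 0 := by
  have shift : ∑ k ∈ Finset.range n, a ^ (k + 1) = ∑ k ∈ Finset.range n, a ^ k := by
    cases n with
    | zero => rfl
    | succ m => rw [Finset.sum_range_succ, Finset.sum_range_succ', ha, pow_zero]
  simpa [cyclicIdempotent, Finset.mul_sum, ← pow_succ'] using congrArg ((n : K)⁻¹ • ·) shift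

lemma inv_mul_sum_inv_pow_mul [NeZero n] (hζ : IsPrimitiveRoot ζ n) {i : ℕ} (hi : i < n) :
    (n : K)⁻¹ * ∑ k ∈ Finset.range n, ζ⁻¹ ^ (i * k) = if i = 0 then 1 else 0 := by
  split_ifs with h
  · have := hζ.neZero'
    simp [h, NeZero.ne]
  · have pow_ne_one : ζ⁻¹ ^ i ≠ 1 := hζ.inv.pow_ne_one_of_pos_of_lt h hi
    have pow_pow_eq_one : (ζ⁻¹ ^ i) ^ n = 1 := by rw [pow_right_comm, hζ.inv.pow_eq_one, one_pow]
    simp only [pow_mul, geom_sum_eq pow_ne_one, pow_pow_eq_one, sub_self, zero_div, mul_zero]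

lemma cyclicIdempotent_mul_of_mul_eq_self [NeZero n] (hζ : IsPrimitiveRoot ζ n) (h : a * v = v)
    {i : ℕ} (hi : i < n) : cyclicIdempotent ζ n a i * v = if i = 0 then v else 0 := by
  have pow_mul_eq (k : ℕ) : a ^ k * v = v := by
    induction k with
    | zero => rw [pow_zero, one_mul]
    | succ k ih => rw [pow_succ, mul_assoc, h, ih]
  simp only [cyclicIdempotent, smul_mul_assoc, Finset.sum_mul, pow_mul_eq, ← Finset.sum_smul,
    smul_smul, inv_mul_sum_inv_pow_mul hζ hi, ite_smul, one_smul, zero_smul]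

lemma isIdempotentElem_cyclicIdempotent_zero [NeZero n] (hζ : IsPrimitiveRoot ζ n)
    (ha : a ^ n = 1) : IsIdempotentElem (cyclicIdempotent ζ n a 0) :=
  cyclicIdempotent_mul_of_mul_eq_self hζ (mul_cyclicIdempotent_zero ha) (NeZero.pos n)

lemma cyclicRoot_mul_of_mul_eq_self [NeZero n] (hq : IsPrimitiveRoot (q ^ n) n) (h : a * v = v) :
    cyclicRoot q n a * v = v := by
  rw [cyclicRoot, Finset.sum_mul, Finset.sum_eq_single_of_mem 0
    (Finset.mem_range.2 (NeZero.pos n))]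
  · rw [smul_mul_assoc, cyclicIdempotent_mul_of_mul_eq_self hq h (NeZero.pos n)]
    simp
  · intro y hy y_ne_zero
    rw [smul_mul_assoc, cyclicIdempotent_mul_of_mul_eq_self hq h (Finset.mem_range.1 hy),
      if_neg y_ne_zero, smul_zero]

lemma semiconjBy_cyclicIdempotent (hζ : ζ ≠ 0) (h : SemiconjBy a x (ζ • x)) (i : ℕ) :
    SemiconjBy x (cyclicIdempotent ζ n a i) (cyclicIdempotent ζ n a (i + 1)) := by
  refine SemiconjBy.smul_right ?_ _
  rw [SemiconjBy, Finset.mul_sum, Finset.sum_mul]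
  refine Finset.sum_congr rfl fun k _ => ?_
  rw [mul_smul_comm, ((semiconjBy_swap_inv_smul hζ h).pow_right k).eq, smul_pow, smul_mul_assoc,
    smul_mul_assoc, smul_smul, ← pow_add, add_one_mul]

end CyclicIdempotent

section ShiftedRoot

variable {K R : Type*} [Field K] [Ring R] [Algebra K R] {q : K} {n : ℕ} [NeZero n] {a x : R}

-- Shifting the index by one turns the term `1_0` of the sum into `q ^ n • 1_n = q ^ n • 1_0`.
lemma sum_range_pow_succ_smul_cyclicIdempotent_succ (hq : IsPrimitiveRoot (q ^ n) n)
    (ha : a ^ n = 1) :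
    ∑ y ∈ Finset.range n, q ^ (y + 1) • cyclicIdempotent (q ^ n) n a (y + 1) =
      cyclicRoot q n a * (1 + (q ^ n - 1) • cyclicIdempotent (q ^ n) n a 0) := by
  have shift :
      ∑ y ∈ Finset.range n, q ^ (y + 1) • cyclicIdempotent (q ^ n) n a (y + 1)
          + cyclicIdempotent (q ^ n) n a 0 =
        cyclicRoot q n a + q ^ n • cyclicIdempotent (q ^ n) n a 0 := by
    have peel := Finset.sum_range_succ' (fun y => q ^ y • cyclicIdempotent (q ^ n) n a y) n
    rw [Finset.sum_range_succ, cyclicIdempotent_self hq.pow_eq_one, pow_zero, one_smul] at peel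
    exact peel.symm
  rw [mul_add, mul_one, mul_smul_comm,
    cyclicRoot_mul_of_mul_eq_self hq (mul_cyclicIdempotent_zero ha), sub_smul, one_smul,
    eq_sub_of_add_eq shift, add_sub_assoc]

lemma smul_mul_cyclicRoot (hq : IsPrimitiveRoot (q ^ n) n) (ha : a ^ n = 1)
    (h : SemiconjBy a x (q ^ n • x)) :
    q • (x * cyclicRoot q n a) =
      cyclicRoot q n a * (1 + (q ^ n - 1) • cyclicIdempotent (q ^ n) n a 0) * x := by
  rw [← sum_range_pow_succ_smul_cyclicIdempotent_succ hq ha, cyclicRoot, Finset.mul_sum,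
    Finset.smul_sum, Finset.sum_mul]
  refine Finset.sum_congr rfl fun y _ => ?_
  rw [mul_smul_comm, (semiconjBy_cyclicIdempotent (hq.ne_zero (NeZero.ne n)) h y).eq, smul_smul,
    ← pow_succ', smul_mul_assoc]

end ShiftedRoot

/-- The element `1 ⊗ (1 - 1_j) + a⁻¹ ⊗ 1_j`, where `a⁻¹` is written `a ^ (n - 1)`. For `j = 0`
it is the coefficient of `1 ⊗ x` in `Δ(x)`; the other `j` arise by moving `1 ⊗ x` past it. -/
def comulTwist {K R : Type*} [Field K] [Ring R] [Algebra K R] (ζ : K) (n : ℕ) (a : R) (j : ℕ) :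
    R ⊗[K] R :=
  1 ⊗ₜ (1 - cyclicIdempotent ζ n a j) + (a ^ (n - 1)) ⊗ₜ cyclicIdempotent ζ n a j

/-- The prescribed value of the coproduct on `x`, as a sum of two `q`-commuting terms. -/
def comulX {K R : Type*} [Field K] [Ring R] [Algebra K R] (q : K) (n : ℕ) (a x : R) : R ⊗[K] R :=
  x ⊗ₜ cyclicRoot q n a + comulTwist (q ^ n) n a 0 * (1 ⊗ₜ x)

/-- The elements `a` and `x` of a `K`-algebra satisfy the defining relations of `A(q)`. The
commutation relation `a * x = q ^ n • (x * a)` is expressed through `SemiconjBy`. -/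
structure AqRelations {K R : Type*} [CommSemiring K] [Semiring R] [Algebra K R]
    (n : ℕ) (q : K) (a x : R) : Prop where
  semiconjBy : SemiconjBy a x (q ^ n • x)
  a_pow : a ^ n = 1
  x_pow : x ^ n ^ 2 = 0

section Comul

variable {K R : Type*} [Field K] [Ring R] [Algebra K R] {ζ q : K} {n : ℕ} {a b c x : R}

lemma commute_tmul_comulTwist (hb : Commute b a) (hc : Commute c a) (j : ℕ) :
    Commute (b ⊗ₜ[K] c) (comulTwist ζ n a j) := by
  have hc := commute_cyclicIdempotent (ζ := ζ) (n := n) hc j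
  refine Commute.add_right ?_ ?_
  · exact (Commute.one_right b).tmul ((Commute.one_right c).sub_right hc)
  · exact (hb.pow_right _).tmul hc

lemma semiconjBy_one_tmul_comulTwist (hζ : ζ ≠ 0) (h : SemiconjBy a x (ζ • x)) (j : ℕ) :
    SemiconjBy ((1 : R) ⊗ₜ[K] x) (comulTwist ζ n a j) (comulTwist ζ n a (j + 1)) := by
  simp only [SemiconjBy, comulTwist, mul_add, add_mul, Algebra.TensorProduct.tmul_mul_tmul, mul_sub,
    sub_mul, one_mul, mul_one, (semiconjBy_cyclicIdempotent hζ h j).eq]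

lemma tmul_one_mul_comulTwist_zero [NeZero n] (hζ : IsPrimitiveRoot ζ n) (ha : a ^ n = 1)
    (h : SemiconjBy a x (ζ • x)) :
    (x ⊗ₜ[K] (1 : R)) * comulTwist ζ n a 0 =
      comulTwist ζ n a 0 * (1 ⊗ₜ (1 + (ζ - 1) • cyclicIdempotent ζ n a 0)) * (x ⊗ₜ 1) := by
  have idem := (isIdempotentElem_cyclicIdempotent_zero hζ ha).eq
  have compl_mul : (1 - cyclicIdempotent ζ n a 0) * (1 + (ζ - 1) • cyclicIdempotent ζ n a 0) =
      1 - cyclicIdempotent ζ n a 0 := by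
    simp [mul_add, sub_mul, idem]
  have idem_mul : cyclicIdempotent ζ n a 0 * (1 + (ζ - 1) • cyclicIdempotent ζ n a 0) =
      ζ • cyclicIdempotent ζ n a 0 := by
    rw [mul_add, mul_one, mul_smul_comm, idem, sub_smul, one_smul, add_sub_cancel]
  simp only [comulTwist, mul_add, add_mul, Algebra.TensorProduct.tmul_mul_tmul, one_mul, mul_one,
    compl_mul, idem_mul, (semiconjBy_pow_pred_smul hζ.pow_eq_one h).eq,
    smul_mul_assoc, TensorProduct.smul_tmul]

lemma semiconjBy_tmul_cyclicRoot [NeZero n] (hq : IsPrimitiveRoot (q ^ n) n) (ha : a ^ n = 1)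
    (h : SemiconjBy a x (q ^ n • x)) :
    SemiconjBy (x ⊗ₜ[K] cyclicRoot q n a) (comulTwist (q ^ n) n a 0 * (1 ⊗ₜ x))
      (q • (comulTwist (q ^ n) n a 0 * (1 ⊗ₜ x))) := by
  have smul_x_mul_S := smul_mul_cyclicRoot hq ha h
  have x_mul_W := tmul_one_mul_comulTwist_zero hq ha h
  set S := cyclicRoot q n a
  set W := comulTwist (q ^ n) n a 0
  set P := 1 + (q ^ n - 1) • cyclicIdempotent (q ^ n) n a 0
  have S_comm_W : Commute ((1 : R) ⊗ₜ[K] S) W :=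
    commute_tmul_comulTwist (Commute.one_left a) (commute_cyclicRoot (Commute.refl a)).symm 0
  calc (x ⊗ₜ[K] S) * (W * (1 ⊗ₜ x))
      = (1 ⊗ₜ S) * ((x ⊗ₜ 1) * W) * (1 ⊗ₜ x) := by
        simp only [← mul_assoc, Algebra.TensorProduct.tmul_mul_tmul, one_mul, mul_one]
    _ = W * ((1 ⊗ₜ S) * (1 ⊗ₜ P) * ((x ⊗ₜ 1) * (1 ⊗ₜ x))) := by
        rw [x_mul_W]
        simp only [← mul_assoc, S_comm_W.eq]
    _ = W * (x ⊗ₜ (q • (x * S))) := by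
        rw [smul_x_mul_S]
        simp only [Algebra.TensorProduct.tmul_mul_tmul, one_mul, mul_one]
    _ = q • (W * (1 ⊗ₜ x)) * (x ⊗ₜ S) := by
        rw [TensorProduct.tmul_smul, mul_smul_comm, smul_mul_assoc, mul_assoc,
          Algebra.TensorProduct.tmul_mul_tmul, one_mul]

lemma semiconjBy_tmul_self_comulX (h : SemiconjBy a x (ζ • x)) :
    SemiconjBy (a ⊗ₜ[K] a) (comulX q n a x) (ζ • comulX q n a x) := by
  have root_part :
      SemiconjBy (a ⊗ₜ[K] a) (x ⊗ₜ cyclicRoot q n a) (ζ • x ⊗ₜ cyclicRoot q n a) := by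
    simp only [SemiconjBy, smul_mul_assoc, Algebra.TensorProduct.tmul_mul_tmul, h.eq,
      (commute_cyclicRoot (Commute.refl a)).eq, TensorProduct.smul_tmul']
  have x_part : SemiconjBy (a ⊗ₜ[K] a) (1 ⊗ₜ x) (ζ • (1 ⊗ₜ x)) := by
    simp only [SemiconjBy, smul_mul_assoc, Algebra.TensorProduct.tmul_mul_tmul, h.eq, one_mul,
      mul_one, TensorProduct.tmul_smul]
  have twist_comm := commute_tmul_comulTwist (ζ := q ^ n) (n := n) (.refl a) (.refl a) 0
  rw [comulX, smul_add, ← mul_smul_comm]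
  exact root_part.add_right (twist_comm.semiconjBy.mul_right x_part)

lemma comulX_pow_eq_zero [NeZero n] (hq : IsPrimitiveRoot q (n ^ 2)) (h : AqRelations n q a x) :
    comulX q n a x ^ n ^ 2 = 0 := by
  have hζ : IsPrimitiveRoot (q ^ n) n := hq.pow (NeZero.pos (n ^ 2)) (sq n)
  have twist_pow := mul_pow_eq_prod_mul_pow
    (semiconjBy_one_tmul_comulTwist (n := n) (hζ.ne_zero (NeZero.ne n)) h.semiconjBy) (n ^ 2)
  rw [comulX, add_pow_of_isPrimitiveRoot hq (semiconjBy_tmul_cyclicRoot hζ h.a_pow h.semiconjBy),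
    twist_pow, Algebra.TensorProduct.tmul_pow, Algebra.TensorProduct.tmul_pow, h.x_pow,
    TensorProduct.zero_tmul, TensorProduct.tmul_zero, mul_zero, add_zero]

lemma AqRelations.comul [NeZero n] (hq : IsPrimitiveRoot q (n ^ 2)) (h : AqRelations n q a x) :
    AqRelations n q (a ⊗ₜ[K] a) (comulX q n a x) where
  semiconjBy := semiconjBy_tmul_self_comulX h.semiconjBy
  a_pow := by rw [Algebra.TensorProduct.tmul_pow, h.a_pow, Algebra.TensorProduct.one_def]
  x_pow := comulX_pow_eq_zero hq h

lemma lid_map_counit_comulX {ε : R →ₐ[K] K} (ha : ε a = 1) (hx : ε x = 0) :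
    Algebra.TensorProduct.lid K R
      (Algebra.TensorProduct.map ε (AlgHom.id K R) (comulX q n a x)) = x := by
  simp [comulX, comulTwist, ha, hx]

lemma rid_map_counit_comulX [NeZero n] (hq : IsPrimitiveRoot (q ^ n) n) {ε : R →ₐ[K] K}
    (ha : ε a = 1) (hx : ε x = 0) :
    Algebra.TensorProduct.rid K K R
      (Algebra.TensorProduct.map (AlgHom.id K R) ε (comulX q n a x)) = x := by
  have counit_root : ε (cyclicRoot q n a) = 1 := by
    rw [map_cyclicRoot, ha, ← mul_one (cyclicRoot q n 1),
      cyclicRoot_mul_of_mul_eq_self hq (mul_one 1)]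
  simp [comulX, hx, counit_root]

end Comul

namespace Aq

variable {n : ℕ} {q : ℂ}

lemma e_eq_cyclicIdempotent (i : ℕ) : e n q i = cyclicIdempotent (q ^ n) n (a n q) i := by
  simp only [e, cyclicIdempotent, ← inv_pow, ← pow_mul, mul_assoc]

variable (n q) in
lemma comul_formula_eq_comulX :
    x n q ⊗ₜ[ℂ] (∑ y ∈ Finset.range n, q ^ y • e n q y) + 1 ⊗ₜ[ℂ] ((1 - e n q 0) * x n q)
      + (a n q ^ (n - 1)) ⊗ₜ[ℂ] (e n q 0 * x n q) = comulX q n (a n q) (x n q) := by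
  simp only [e_eq_cyclicIdempotent, comulX, comulTwist, cyclicRoot, add_mul,
    Algebra.TensorProduct.tmul_mul_tmul, mul_one, add_assoc]

variable (n q) in
lemma aqRelations_generators : AqRelations n q (a n q) (x n q) where
  semiconjBy := by
    simpa only [a, x, SemiconjBy, smul_mul_assoc, map_mul, map_smul] using
      RingQuot.mkAlgHom_rel ℂ (AqRel.comm (n := n) (q := q))
  a_pow := by
    simpa only [a, map_pow, map_one] using RingQuot.mkAlgHom_rel ℂ (AqRel.aOrd (n := n) (q := q))
  x_pow := by
    simpa only [x, map_pow, map_zero] using RingQuot.mkAlgHom_rel ℂ (AqRel.xNil (n := n) (q := q))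

variable {B : Type*} [Semiring B] [Algebra ℂ B]

lemma algHom_ext {f g : Aq n q →ₐ[ℂ] B} (ha : f (a n q) = g (a n q)) (hx : f (x n q) = g (x n q)) :
    f = g := by
  refine RingQuot.ringQuot_ext' _ _ _ (FreeAlgebra.hom_ext (funext fun t => ?_))
  cases t
  exacts [ha, hx]

lemma existsUnique_algHom {a' x' : B} (h : AqRelations n q a' x') :
    ∃! f : Aq n q →ₐ[ℂ] B, f (a n q) = a' ∧ f (x n q) = x' := by
  let g : FreeAlgebra ℂ AqGen →ₐ[ℂ] B := FreeAlgebra.lift ℂ fun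
    | AqGen.a => a'
    | AqGen.x => x'
  have g_a : g (ι ℂ AqGen.a) = a' := FreeAlgebra.lift_ι_apply _ _
  have g_x : g (ι ℂ AqGen.x) = x' := FreeAlgebra.lift_ι_apply _ _
  have g_rel ⦃u v : FreeAlgebra ℂ AqGen⦄ (huv : AqRel n q u v) : g u = g v := by
    cases huv with
    | comm => simp only [map_mul, map_smul, g_a, g_x, h.semiconjBy.eq, smul_mul_assoc]
    | aOrd => simp only [map_pow, map_one, g_a, h.a_pow]
    | xNil => simp only [map_pow, map_zero, g_x, h.x_pow]
  let f : Aq n q →ₐ[ℂ] B := RingQuot.liftAlgHom ℂ ⟨g, g_rel⟩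
  have f_a : f (a n q) = a' := (RingQuot.liftAlgHom_mkAlgHom_apply ℂ g g_rel _).trans g_a
  have f_x : f (x n q) = x' := (RingQuot.liftAlgHom_mkAlgHom_apply ℂ g g_rel _).trans g_x
  exact ⟨f, ⟨f_a, f_x⟩, fun f' hf' =>
    algHom_ext (hf'.1.trans f_a.symm) (hf'.2.trans f_x.symm)⟩

lemma algHom_apply_eq_self {f : Aq n q →ₐ[ℂ] Aq n q} (ha : f (a n q) = a n q)
    (hx : f (x n q) = x n q) (z : Aq n q) : f z = z :=
  DFunLike.congr_fun (algHom_ext (g := AlgHom.id ℂ (Aq n q)) ha hx) z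

end Aq

/-- There is a unique algebra map `Δ : A(q) → A(q) ⊗ A(q)` with
`Δ(a) = a ⊗ a` and
`Δ(x) = x ⊗ ∑_y q^y 1_y + 1 ⊗ (1 - 1_0)x + a^{n-1} ⊗ 1_0 x`,
and a unique algebra map `ε : A(q) → ℂ` with `ε(a) = 1`, `ε(x) = 0`;
moreover they satisfy the counit axioms. -/
theorem Aq_coproduct_counit (n : ℕ) (hn : 2 ≤ n) (q : ℂ)
    (hq : IsPrimitiveRoot q (n ^ 2)) :
    (∃! Δ : Aq n q →ₐ[ℂ] (Aq n q ⊗[ℂ] Aq n q),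
      Δ (Aq.a n q) = Aq.a n q ⊗ₜ[ℂ] Aq.a n q ∧
      Δ (Aq.x n q) =
        Aq.x n q ⊗ₜ[ℂ] (∑ y ∈ Finset.range n, q ^ y • Aq.e n q y)
        + 1 ⊗ₜ[ℂ] ((1 - Aq.e n q 0) * Aq.x n q)
        + (Aq.a n q ^ (n - 1)) ⊗ₜ[ℂ] (Aq.e n q 0 * Aq.x n q)) ∧
    (∃! ε : Aq n q →ₐ[ℂ] ℂ, ε (Aq.a n q) = 1 ∧ ε (Aq.x n q) = 0) ∧
    (∀ (Δ : Aq n q →ₐ[ℂ] (Aq n q ⊗[ℂ] Aq n q)) (ε : Aq n q →ₐ[ℂ] ℂ),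
      (Δ (Aq.a n q) = Aq.a n q ⊗ₜ[ℂ] Aq.a n q ∧
       Δ (Aq.x n q) =
        Aq.x n q ⊗ₜ[ℂ] (∑ y ∈ Finset.range n, q ^ y • Aq.e n q y)
        + 1 ⊗ₜ[ℂ] ((1 - Aq.e n q 0) * Aq.x n q)
        + (Aq.a n q ^ (n - 1)) ⊗ₜ[ℂ] (Aq.e n q 0 * Aq.x n q)) →
      (ε (Aq.a n q) = 1 ∧ ε (Aq.x n q) = 0) →
      ∀ z : Aq n q,
        (Algebra.TensorProduct.lid ℂ (Aq n q))
          ((Algebra.TensorProduct.map ε (AlgHom.id ℂ (Aq n q))) (Δ z)) = z ∧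
        (Algebra.TensorProduct.rid ℂ ℂ (Aq n q))
          ((Algebra.TensorProduct.map (AlgHom.id ℂ (Aq n q)) ε) (Δ z)) = z) := by
  have : NeZero n := ⟨by omega⟩
  have hζ : IsPrimitiveRoot (q ^ n) n := hq.pow (NeZero.pos (n ^ 2)) (sq n)
  rw [Aq.comul_formula_eq_comulX]
  have counit_relations : AqRelations n q (1 : ℂ) 0 :=
    ⟨by simp [SemiconjBy], one_pow n, zero_pow (NeZero.ne (n ^ 2))⟩
  refine ⟨Aq.existsUnique_algHom ((Aq.aqRelations_generators n q).comul hq),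
    Aq.existsUnique_algHom counit_relations, ?_⟩
  rintro Δ ε ⟨Δ_a, Δ_x⟩ ⟨ε_a, ε_x⟩ z
  constructor
  · refine Aq.algHom_apply_eq_self (f := (Algebra.TensorProduct.lid ℂ (Aq n q)).toAlgHom.comp
      ((Algebra.TensorProduct.map ε (AlgHom.id ℂ (Aq n q))).comp Δ)) ?_ ?_ z
    · simp [Δ_a, ε_a]
    · simpa [Δ_x] using lid_map_counit_comulX ε_a ε_x
  · refine Aq.algHom_apply_eq_self (f := (Algebra.TensorProduct.rid ℂ ℂ (Aq n q)).toAlgHom.comp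
      ((Algebra.TensorProduct.map (AlgHom.id ℂ (Aq n q)) ε).comp Δ)) ?_ ?_ z
    · simp [Δ_a, ε_a]
    · simpa [Δ_x] using rid_map_counit_comulX hζ ε_a ε_x
end
end

section
/- There exists a unique ℂ-algebra homomorphism Δ : H(32) → H(32) ⊗_ℂ H(32) satisfying Δ(a) = a ⊗ a, Δ(x) = x ⊗ (p₊ + i·p₋) + 1 ⊗ p₊x + a ⊗ p₋x and Δ(y) = y ⊗ (p₊ − i·p₋) + 1 ⊗ p₊y + a ⊗ p₋y, and a unique ℂ-algebra homomorphism ε : H(32) → ℂ with ε(a) = 1, ε(x) = 0, ε(y) = 0; moreover (ε ⊗ id) ∘ Δ = id and (id ⊗ ε) ∘ Δ = id. -/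
noncomputable section

open scoped TensorProduct

/-- The three generators of `H(32)`. -/
inductive HGen : Type
  | a : HGen
  | x : HGen
  | y : HGen

open FreeAlgebra

/-- The defining relations of `H(32)` (for `i` a fixed primitive 4th root of unity):
`a² = 1`, `ax = -xa`, `ay = -ya`, `x⁴ = 0`, `y⁴ = 0`, `xy = -i·yx`. -/
inductive HRel (i : ℂ) : FreeAlgebra ℂ HGen → FreeAlgebra ℂ HGen → Prop
  | aSq : HRel i ((ι ℂ HGen.a) ^ 2) 1
  | ax : HRel i (ι ℂ HGen.a * ι ℂ HGen.x) (-(ι ℂ HGen.x * ι ℂ HGen.a))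
  | ay : HRel i (ι ℂ HGen.a * ι ℂ HGen.y) (-(ι ℂ HGen.y * ι ℂ HGen.a))
  | xQuart : HRel i ((ι ℂ HGen.x) ^ 4) 0
  | yQuart : HRel i ((ι ℂ HGen.y) ^ 4) 0
  | xy : HRel i (ι ℂ HGen.x * ι ℂ HGen.y) (-(i • (ι ℂ HGen.y * ι ℂ HGen.x)))

/-- The algebra `H(32)`. -/
abbrev H32 (i : ℂ) : Type := RingQuot (HRel i)

/-- The image of the generator `a` in `H(32)`. -/
def H32.a (i : ℂ) : H32 i := RingQuot.mkAlgHom ℂ (HRel i) (ι ℂ HGen.a)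

/-- The image of the generator `x` in `H(32)`. -/
def H32.x (i : ℂ) : H32 i := RingQuot.mkAlgHom ℂ (HRel i) (ι ℂ HGen.x)

/-- The image of the generator `y` in `H(32)`. -/
def H32.y (i : ℂ) : H32 i := RingQuot.mkAlgHom ℂ (HRel i) (ι ℂ HGen.y)

/-- `p₊ = (1+a)/2`. -/
def H32.pp (i : ℂ) : H32 i := (2 : ℂ)⁻¹ • (1 + H32.a i)

/-- `p₋ = (1-a)/2`. -/
def H32.pm (i : ℂ) : H32 i := (2 : ℂ)⁻¹ • (1 - H32.a i)

/-!
Everything reduces to `q`-commutation. Put `g_s = p₊ + s • p₋`, so that `g_s g_t = g_{st}` and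
`a = g_{-1}`, and let `E = 1 ⊗ p₊ + a ⊗ p₋` be the R-matrix of `ℂ[ℤ/2]`. The prescribed value of
`Δ` at a generator `z ∈ {x, y}` is `z ⊗ g_s + E (1 ⊗ z)` with `s = ± i`. Since `z` exchanges `p₊`
and `p₋`, one gets `E (1 ⊗ z) · E (1 ⊗ w) = a ⊗ zw`, and `E (1 ⊗ z)` and `u ⊗ g_s` commute up to
the factor `s`. As `s² = -1`, the Gaussian binomials `[4 choose k]_s` with `0 < k < 4` vanish, so
the fourth power of the sum is the sum of the fourth powers, which is zero; the other relations are
checked summand by summand.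
-/

section QCommute

variable {k A B : Type*} [CommRing k] [Ring A] [Algebra k A] [Ring B] [Algebra k B]

/-- Commutation up to the scalar `q`: `x y = q y x`. All the defining relations of `H(32)` other
than those on powers of a generator have this form. -/
def QCommute (q : k) (x y : A) : Prop := x * y = q • (y * x)

namespace QCommute

variable {q r : k} {x y z : A}

lemma neg_iff : QCommute (-q) x y ↔ x * y = -(q • (y * x)) := by
  rw [QCommute, neg_smul]

lemma neg_one_iff : QCommute (-1 : k) x y ↔ x * y = -(y * x) := by
  rw [neg_iff, one_smul]

lemma of_commute (h : Commute x y) : QCommute (1 : k) x y := by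
  rw [QCommute, one_smul, h.eq]

lemma symm (hqr : q * r = 1) (h : QCommute q x y) : QCommute r y x := by
  rw [QCommute, h, smul_smul, mul_comm r q, hqr, one_smul]

lemma add_left (hx : QCommute q x z) (hy : QCommute q y z) : QCommute q (x + y) z := by
  rw [QCommute, add_mul, hx, hy, mul_add, smul_add]

lemma add_right (hy : QCommute q x y) (hz : QCommute q x z) : QCommute q x (y + z) := by
  rw [QCommute, mul_add, hy, hz, add_mul, smul_add]

lemma mul_right (hy : QCommute q x y) (hz : QCommute r x z) : QCommute (q * r) x (y * z) := by
  rw [QCommute, ← mul_assoc, hy, smul_mul_assoc, mul_assoc, hz, mul_smul_comm, smul_smul, mul_assoc]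

lemma tmul {x' y' : B} (h : QCommute q x y) (h' : QCommute r x' y') :
    QCommute (q * r) (x ⊗ₜ[k] x') (y ⊗ₜ[k] y') := by
  rw [QCommute, Algebra.TensorProduct.tmul_mul_tmul, Algebra.TensorProduct.tmul_mul_tmul, h, h',
    TensorProduct.smul_tmul_smul]

lemma add_pow_four (hq : q ^ 2 = -1) (h : QCommute q y x) : (x + y) ^ 4 = x ^ 4 + y ^ 4 := by
  have swap : y * x = q • (x * y) := h
  have move_left (w : A) : y * (x * w) = q • (x * (y * w)) := by
    rw [← mul_assoc, h, smul_mul_assoc, mul_assoc]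
  simp only [pow_succ, pow_zero, one_mul, mul_add, add_mul, mul_assoc, swap, move_left,
    mul_smul_comm, smul_mul_assoc, smul_smul]
  match_scalars <;> grind

end QCommute

end QCommute

section IdempotentTwist

variable {k A : Type*} [CommRing k] [Ring A] [Algebra k A]

/-- The element `g_s = p + s (1 - p)` attached to an idempotent `p`: it acts by `1` on the image of
`p` and by `s` on the image of `1 - p`. For `p = p₊` in `H(32)`, `g_{-1}` is `a`. -/
def idempotentTwist (p : A) (s : k) : A := p + s • (1 - p)

variable {p w z : A} {s t c : k}

lemma commute_idempotentTwist (h : Commute w p) (s : k) : Commute w (idempotentTwist p s) :=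
  h.add_right (((Commute.one_right w).sub_right h).smul_right s)

lemma commute_idempotentTwist_self (p : A) (s : k) : Commute (idempotentTwist p s) p :=
  (commute_idempotentTwist (Commute.refl p) s).symm

lemma idempotentTwist_mul (hp : IsIdempotentElem p) (s t : k) :
    idempotentTwist p s * idempotentTwist p t = idempotentTwist p (s * t) := by
  simp only [idempotentTwist, add_mul, mul_add, smul_mul_assoc, mul_smul_comm, hp.eq,
    hp.one_sub.eq, hp.mul_one_sub_self, hp.one_sub_mul_self, smul_smul, smul_zero, add_zero,
    zero_add, mul_comm t s]

lemma mul_idempotentTwist (hst : s * t = 1) (hz : SemiconjBy z p (1 - p)) :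
    z * idempotentTwist p s = s • (idempotentTwist p t * z) := by
  have swap : z * (1 - p) = p * z := by
    rw [mul_sub, mul_one, hz.eq, sub_mul, one_mul, sub_sub_cancel]
  simp only [idempotentTwist, mul_add, add_mul, mul_smul_comm, smul_mul_assoc, hz.eq, swap,
    smul_add, smul_smul, hst, one_smul, add_comm]

lemma isIdempotentElem_smul_one_add {a : A} (hc : 2 * c = 1) (ha : a ^ 2 = 1) :
    IsIdempotentElem (c • (1 + a)) := by
  rw [IsIdempotentElem, smul_mul_smul_comm, add_mul, mul_add, mul_add, ← sq a, ha, one_mul, one_mul,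
    mul_one]
  match_scalars <;> linear_combination c * hc

lemma idempotentTwist_smul_one_add (hc : 2 * c = 1) (a : A) :
    idempotentTwist (c • (1 + a)) (-1 : k) = a := by
  rw [idempotentTwist]
  match_scalars <;> linear_combination hc

lemma QCommute.semiconjBy_smul_one_add {a : A} (hc : 2 * c = 1) (h : QCommute (-1 : k) a z) :
    SemiconjBy z (c • (1 + a)) (1 - c • (1 + a)) := by
  rw [SemiconjBy, sub_mul, smul_mul_assoc, add_mul, h, mul_smul_comm, mul_add, mul_one, one_mul]
  match_scalars
  · linear_combination hc
  · ring

end IdempotentTwist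

section SkewComul

variable {k A B : Type*} [CommRing k] [Ring A] [Algebra k A] [Ring B] [Algebra k B]

/-- The element `E = 1 ⊗ p + a ⊗ (1 - p)`. For `a = g_{-1}` it is the R-matrix of the group algebra
of `ℤ/2`. -/
def signRMatrix (k : Type*) {A B : Type*} [CommRing k] [Ring A] [Algebra k A] [Ring B]
    [Algebra k B] (a : A) (p : B) : A ⊗[k] B :=
  1 ⊗ₜ p + a ⊗ₜ (1 - p)

/-- The common shape `u ⊗ g_s + E (1 ⊗ v)` of the coproducts of `x` (where `u = v = x`, `s = i`) and
of `y` (where `u = v = y`, `s = -i`). With `u` and `v` in different algebras it describes the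
action of `x` or `y` on a tensor product of representations. -/
def skewComul (a : A) (p : B) (s : k) (u : A) (v : B) : A ⊗[k] B :=
  u ⊗ₜ idempotentTwist p s + signRMatrix k a p * 1 ⊗ₜ v

variable {a u : A} {p v w : B} {s : k}

lemma skewComul_eq (a : A) (p : B) (s : k) (u : A) (v : B) :
    skewComul a p s u v
      = u ⊗ₜ (p + s • (1 - p)) + 1 ⊗ₜ (p * v) + a ⊗ₜ ((1 - p) * v) := by
  simp only [skewComul, signRMatrix, idempotentTwist, add_mul,
    Algebra.TensorProduct.tmul_mul_tmul, mul_one, add_assoc]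

lemma skewComul_neg_eq (a : A) (p : B) (s : k) (u : A) (v : B) :
    skewComul a p (-s) u v
      = u ⊗ₜ (p - s • (1 - p)) + 1 ⊗ₜ (p * v) + a ⊗ₜ ((1 - p) * v) := by
  rw [skewComul_eq, neg_smul, ← sub_eq_add_neg]

lemma signRMatrix_mul_signRMatrix_one_sub (hp : IsIdempotentElem p) (a : A) :
    signRMatrix k a p * signRMatrix k a (1 - p) = a ⊗ₜ 1 := by
  simp only [signRMatrix, add_mul, mul_add, Algebra.TensorProduct.tmul_mul_tmul, sub_sub_cancel,
    hp.eq, hp.one_sub.eq, hp.mul_one_sub_self, hp.one_sub_mul_self, TensorProduct.tmul_zero,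
    one_mul, mul_one, zero_add, add_zero, ← TensorProduct.tmul_add, sub_add_cancel]

lemma one_tmul_mul_signRMatrix (hv : SemiconjBy v p (1 - p)) (a : A) :
    1 ⊗ₜ v * signRMatrix k a p = signRMatrix k a (1 - p) * 1 ⊗ₜ v := by
  have swap : SemiconjBy v (1 - p) (1 - (1 - p)) := (SemiconjBy.one_right v).sub_right hv
  simp only [signRMatrix, add_mul, mul_add, Algebra.TensorProduct.tmul_mul_tmul, hv.eq, swap.eq,
    one_mul, mul_one]

lemma tmul_mul_signRMatrix (hp : IsIdempotentElem p) (hu : QCommute (-1 : k) a u)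
    (hw : Commute w p) :
    u ⊗ₜ w * signRMatrix k a p = signRMatrix k a p * u ⊗ₜ (idempotentTwist p (-1 : k) * w) := by
  have twist_on_p : p * idempotentTwist p (-1 : k) = p := by
    rw [idempotentTwist, mul_add, mul_smul_comm, hp.eq, hp.mul_one_sub_self, smul_zero, add_zero]
  have twist_on_compl : (1 - p) * idempotentTwist p (-1 : k) = -(1 - p) := by
    rw [idempotentTwist, mul_add, mul_smul_comm, hp.one_sub.eq, hp.one_sub_mul_self, zero_add,
      neg_one_smul]
  have hw' : w * (1 - p) = (1 - p) * w := ((Commute.one_right w).sub_right hw).eq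
  have hu' : a * u = -(u * a) := QCommute.neg_one_iff.mp hu
  simp only [signRMatrix, mul_add, add_mul, Algebra.TensorProduct.tmul_mul_tmul, ← mul_assoc,
    twist_on_p, twist_on_compl, hw.eq, hw', hu', one_mul, mul_one, neg_mul, TensorProduct.neg_tmul,
    TensorProduct.tmul_neg, neg_neg]

lemma signRMatrix_mul_one_tmul_mul (hp : IsIdempotentElem p) (hv : SemiconjBy v p (1 - p))
    (a : A) (w : B) :
    signRMatrix k a p * 1 ⊗ₜ v * (signRMatrix k a p * 1 ⊗ₜ w) = a ⊗ₜ (v * w) := by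
  calc signRMatrix k a p * 1 ⊗ₜ v * (signRMatrix k a p * 1 ⊗ₜ w)
      = signRMatrix k a p * (1 ⊗ₜ v * signRMatrix k a p) * 1 ⊗ₜ w := by simp only [mul_assoc]
    _ = signRMatrix k a p * signRMatrix k a (1 - p) * (1 ⊗ₜ v * 1 ⊗ₜ w) := by
      rw [one_tmul_mul_signRMatrix hv]; simp only [mul_assoc]
    _ = a ⊗ₜ (v * w) := by
      rw [signRMatrix_mul_signRMatrix_one_sub hp]
      simp only [Algebra.TensorProduct.tmul_mul_tmul, one_mul, mul_one]

lemma qCommute_signRMatrix_mul_tmul (hs : s ^ 2 = -1) (hp : IsIdempotentElem p)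
    (hu : QCommute (-1 : k) a u) (hv : SemiconjBy v p (1 - p)) :
    QCommute s (signRMatrix k a p * 1 ⊗ₜ v) (u ⊗ₜ idempotentTwist p s) := by
  have s_mul_neg : s * -s = 1 := by linear_combination -hs
  rw [QCommute, ← mul_assoc, tmul_mul_signRMatrix hp hu (commute_idempotentTwist_self p s),
    idempotentTwist_mul hp, neg_one_mul, mul_assoc, mul_assoc, Algebra.TensorProduct.tmul_mul_tmul,
    Algebra.TensorProduct.tmul_mul_tmul, one_mul, mul_one, mul_idempotentTwist s_mul_neg hv,
    TensorProduct.tmul_smul, mul_smul_comm]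

lemma commute_tmul_signRMatrix (hw : Commute w p) (a : A) :
    Commute (a ⊗ₜ w) (signRMatrix k a p) := by
  have hw' : w * (1 - p) = (1 - p) * w := ((Commute.one_right w).sub_right hw).eq
  simp only [Commute, SemiconjBy, signRMatrix, mul_add, add_mul,
    Algebra.TensorProduct.tmul_mul_tmul, hw.eq, hw', one_mul, mul_one]

lemma qCommute_tmul_skewComul (s : k) (hu : QCommute (-1 : k) a u)
    (hv : QCommute (-1 : k) (idempotentTwist p (-1 : k)) v) :
    QCommute (-1 : k) (a ⊗ₜ idempotentTwist p (-1 : k)) (skewComul a p s u v) := by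
  have comm_p : Commute (idempotentTwist p (-1 : k)) p := commute_idempotentTwist_self p _
  have left : QCommute (-1 : k) (a ⊗ₜ[k] idempotentTwist p (-1 : k))
      (u ⊗ₜ[k] idempotentTwist p s) := by
    simpa only [mul_one] using hu.tmul (.of_commute (commute_idempotentTwist comm_p s))
  have right : QCommute (-1 : k) (a ⊗ₜ[k] idempotentTwist p (-1 : k))
      (signRMatrix k a p * 1 ⊗ₜ v) := by
    have with_one_tmul := (QCommute.of_commute (k := k) (Commute.one_right a)).tmul hv
    simpa only [one_mul] using
      (QCommute.of_commute (commute_tmul_signRMatrix comm_p a)).mul_right with_one_tmul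
  exact left.add_right right

lemma skewComul_pow_four (hs : s ^ 2 = -1) (hp : IsIdempotentElem p) (hu : QCommute (-1 : k) a u)
    (hv : SemiconjBy v p (1 - p)) (hu4 : u ^ 4 = 0) (hv4 : v ^ 4 = 0) :
    skewComul a p s u v ^ 4 = 0 := by
  have right_sq : (signRMatrix k a p * 1 ⊗ₜ v) ^ 2 = a ⊗ₜ (v ^ 2) := by
    rw [sq, signRMatrix_mul_one_tmul_mul hp hv, sq]
  have right_pow_four : (signRMatrix k a p * 1 ⊗ₜ v) ^ 4 = 0 := by
    rw [pow_mul _ 2 2, right_sq, Algebra.TensorProduct.tmul_pow, ← pow_mul, hv4,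
      TensorProduct.tmul_zero]
  rw [skewComul, (qCommute_signRMatrix_mul_tmul hs hp hu hv).add_pow_four hs,
    Algebra.TensorProduct.tmul_pow, hu4, TensorProduct.zero_tmul, right_pow_four, add_zero]

lemma qCommute_skewComul {u' : A} {v' : B} (hs : s ^ 2 = -1) (hp : IsIdempotentElem p)
    (hu : QCommute (-1 : k) a u) (hu' : QCommute (-1 : k) a u')
    (hv : SemiconjBy v p (1 - p)) (hv' : SemiconjBy v' p (1 - p))
    (huu' : QCommute (-s) u u') (hvv' : QCommute (-s) v v') :
    QCommute (-s) (skewComul a p s u v) (skewComul a p (-s) u' v') := by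
  have twists : QCommute (1 : k) (idempotentTwist p s) (idempotentTwist p (-s)) :=
    .of_commute (commute_idempotentTwist (commute_idempotentTwist_self p s) _)
  have left_left :
      QCommute (-s) (u ⊗ₜ[k] idempotentTwist p s) (u' ⊗ₜ[k] idempotentTwist p (-s)) := by
    simpa only [mul_one] using huu'.tmul twists
  have left_right : QCommute (-s) (u ⊗ₜ[k] idempotentTwist p s) (signRMatrix k a p * 1 ⊗ₜ v') :=
    (qCommute_signRMatrix_mul_tmul hs hp hu hv').symm (by linear_combination -hs)
  have right_left :
      QCommute (-s) (signRMatrix k a p * 1 ⊗ₜ v) (u' ⊗ₜ[k] idempotentTwist p (-s)) :=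
    qCommute_signRMatrix_mul_tmul ((neg_sq s).trans hs) hp hu' hv
  have right_right :
      QCommute (-s) (signRMatrix k a p * 1 ⊗ₜ v) (signRMatrix k a p * 1 ⊗ₜ v') := by
    rw [QCommute, signRMatrix_mul_one_tmul_mul hp hv, signRMatrix_mul_one_tmul_mul hp hv', hvv',
      TensorProduct.tmul_smul]
  exact (left_left.add_right left_right).add_left (right_left.add_right right_right)

lemma lid_map_skewComul (ε : A →ₐ[k] k) (ha : ε a = 1) (hu : ε u = 0) (p v : B) (s : k) :
    Algebra.TensorProduct.lid k B
      (Algebra.TensorProduct.map ε (AlgHom.id k B) (skewComul a p s u v)) = v := by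
  simp [skewComul_eq, ha, hu, ← add_mul]

lemma rid_map_skewComul (ε : B →ₐ[k] k) (hp : ε p = 1) (hv : ε v = 0) (a u : A) (s : k) :
    Algebra.TensorProduct.rid k k A
      (Algebra.TensorProduct.map (AlgHom.id k A) ε (skewComul a p s u v)) = u := by
  simp [skewComul_eq, hp, hv]

end SkewComul

/-- The defining relations of `H(32)` for three elements of an arbitrary algebra. -/
structure H32Relations {k A : Type*} [CommRing k] [Ring A] [Algebra k A] (i : k) (a x y : A) :
    Prop where
  a_sq : a ^ 2 = 1
  a_x : QCommute (-1 : k) a x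
  a_y : QCommute (-1 : k) a y
  x_pow_four : x ^ 4 = 0
  y_pow_four : y ^ 4 = 0
  x_y : QCommute (-i) x y

lemma H32Relations.skewComul {k A B : Type*} [CommRing k] [Ring A] [Algebra k A] [Ring B]
    [Algebra k B] {i : k} {a x y : A} {p x' y' : B} (hi : i ^ 2 = -1) (h : H32Relations i a x y)
    (h' : H32Relations i (idempotentTwist p (-1 : k)) x' y') (hp : IsIdempotentElem p)
    (hx' : SemiconjBy x' p (1 - p)) (hy' : SemiconjBy y' p (1 - p)) :
    H32Relations i (a ⊗ₜ[k] idempotentTwist p (-1 : k)) (skewComul a p i x x')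
      (skewComul a p (-i) y y') where
  a_sq := by
    rw [Algebra.TensorProduct.tmul_pow, h.a_sq, h'.a_sq, Algebra.TensorProduct.one_def]
  a_x := qCommute_tmul_skewComul i h.a_x h'.a_x
  a_y := qCommute_tmul_skewComul (-i) h.a_y h'.a_y
  x_pow_four := skewComul_pow_four hi hp h.a_x hx' h.x_pow_four h'.x_pow_four
  y_pow_four :=
    skewComul_pow_four ((neg_sq i).trans hi) hp h.a_y hy' h.y_pow_four h'.y_pow_four
  x_y := qCommute_skewComul hi hp h.a_x h.a_y hx' hy' h.x_y h'.x_y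

namespace H32

variable {i : ℂ}

lemma relations (i : ℂ) : H32Relations i (a i) (x i) (y i) where
  a_sq := by simpa [a] using RingQuot.mkAlgHom_rel ℂ (HRel.aSq (i := i))
  a_x := QCommute.neg_one_iff.mpr <| by
    simpa [a, x] using RingQuot.mkAlgHom_rel ℂ (HRel.ax (i := i))
  a_y := QCommute.neg_one_iff.mpr <| by
    simpa [a, y] using RingQuot.mkAlgHom_rel ℂ (HRel.ay (i := i))
  x_pow_four := by simpa [x] using RingQuot.mkAlgHom_rel ℂ (HRel.xQuart (i := i))
  y_pow_four := by simpa [y] using RingQuot.mkAlgHom_rel ℂ (HRel.yQuart (i := i))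
  x_y := QCommute.neg_iff.mpr <| by
    simpa [x, y] using RingQuot.mkAlgHom_rel ℂ (HRel.xy (i := i))

lemma algHom_ext {S : Type*} [Semiring S] [Algebra ℂ S] {f g : H32 i →ₐ[ℂ] S}
    (ha : f (a i) = g (a i)) (hx : f (x i) = g (x i)) (hy : f (y i) = g (y i)) : f = g := by
  refine RingQuot.ringQuot_ext' _ _ _ (FreeAlgebra.hom_ext (funext fun generator ↦ ?_))
  cases generator
  exacts [ha, hx, hy]

lemma existsUnique_algHom {S : Type*} [Ring S] [Algebra ℂ S] {a' x' y' : S}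
    (h : H32Relations i a' x' y') :
    ∃! f : H32 i →ₐ[ℂ] S, f (a i) = a' ∧ f (x i) = x' ∧ f (y i) = y' := by
  let φ : FreeAlgebra ℂ HGen →ₐ[ℂ] S :=
    FreeAlgebra.lift ℂ fun | .a => a' | .x => x' | .y => y'
  have φ_a : φ (ι ℂ .a) = a' := FreeAlgebra.lift_ι_apply _ _
  have φ_x : φ (ι ℂ .x) = x' := FreeAlgebra.lift_ι_apply _ _
  have φ_y : φ (ι ℂ .y) = y' := FreeAlgebra.lift_ι_apply _ _
  have φ_rel ⦃u v⦄ (huv : HRel i u v) : φ u = φ v := by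
    cases huv
    · simp [φ_a, h.a_sq]
    · simpa [φ_a, φ_x] using QCommute.neg_one_iff.mp h.a_x
    · simpa [φ_a, φ_y] using QCommute.neg_one_iff.mp h.a_y
    · simp [φ_x, h.x_pow_four]
    · simp [φ_y, h.y_pow_four]
    · simpa [φ_x, φ_y] using QCommute.neg_iff.mp h.x_y
  let f : H32 i →ₐ[ℂ] S := RingQuot.liftAlgHom ℂ ⟨φ, φ_rel⟩
  have f_a : f (a i) = a' := (RingQuot.liftAlgHom_mkAlgHom_apply ..).trans φ_a
  have f_x : f (x i) = x' := (RingQuot.liftAlgHom_mkAlgHom_apply ..).trans φ_x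
  have f_y : f (y i) = y' := (RingQuot.liftAlgHom_mkAlgHom_apply ..).trans φ_y
  refine ⟨f, ⟨f_a, f_x, f_y⟩, ?_⟩
  rintro g ⟨g_a, g_x, g_y⟩
  exact algHom_ext (g_a.trans f_a.symm) (g_x.trans f_x.symm) (g_y.trans f_y.symm)

lemma pm_eq_one_sub_pp (i : ℂ) : pm i = 1 - pp i := by
  rw [pm, pp]
  module

lemma skewComul_eq_pp_add_pm (s : ℂ) (z : H32 i) :
    skewComul (a i) (pp i) s z z
      = z ⊗ₜ (pp i + s • pm i) + 1 ⊗ₜ (pp i * z) + a i ⊗ₜ (pm i * z) := by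
  rw [skewComul_eq, pm_eq_one_sub_pp]

lemma skewComul_neg_eq_pp_sub_pm (s : ℂ) (z : H32 i) :
    skewComul (a i) (pp i) (-s) z z
      = z ⊗ₜ (pp i - s • pm i) + 1 ⊗ₜ (pp i * z) + a i ⊗ₜ (pm i * z) := by
  rw [skewComul_neg_eq, pm_eq_one_sub_pp]

lemma relations_comul (hi : i ^ 2 = -1) :
    H32Relations i (a i ⊗ₜ[ℂ] a i) (skewComul (a i) (pp i) i (x i) (x i))
      (skewComul (a i) (pp i) (-i) (y i) (y i)) := by
  have half : (2 : ℂ) * 2⁻¹ = 1 := mul_inv_cancel₀ two_ne_zero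
  have gens := relations i
  have twist_eq_a : idempotentTwist (pp i) (-1 : ℂ) = a i := idempotentTwist_smul_one_add half _
  have tensor := gens.skewComul (p := pp i) hi (twist_eq_a.symm ▸ gens)
    (isIdempotentElem_smul_one_add half gens.a_sq) (gens.a_x.semiconjBy_smul_one_add half)
    (gens.a_y.semiconjBy_smul_one_add half)
  rwa [twist_eq_a] at tensor

lemma relations_counit (i : ℂ) : H32Relations i (1 : ℂ) 0 0 := by
  constructor <;> simp [QCommute]

section Counit

variable {Δ : H32 i →ₐ[ℂ] H32 i ⊗[ℂ] H32 i} {ε : H32 i →ₐ[ℂ] ℂ} {s t : ℂ}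

lemma lid_comp_map_counit_comp_comul (Δ_a : Δ (a i) = a i ⊗ₜ a i)
    (Δ_x : Δ (x i) = skewComul (a i) (pp i) s (x i) (x i))
    (Δ_y : Δ (y i) = skewComul (a i) (pp i) t (y i) (y i))
    (ε_a : ε (a i) = 1) (ε_x : ε (x i) = 0) (ε_y : ε (y i) = 0) :
    (Algebra.TensorProduct.lid ℂ (H32 i)).toAlgHom.comp
      ((Algebra.TensorProduct.map ε (AlgHom.id ℂ (H32 i))).comp Δ) = AlgHom.id ℂ (H32 i) := by
  apply algHom_ext
  · simp [Δ_a, ε_a]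
  · simpa [Δ_x] using lid_map_skewComul ε ε_a ε_x _ _ _
  · simpa [Δ_y] using lid_map_skewComul ε ε_a ε_y _ _ _

lemma rid_comp_map_counit_comp_comul (Δ_a : Δ (a i) = a i ⊗ₜ a i)
    (Δ_x : Δ (x i) = skewComul (a i) (pp i) s (x i) (x i))
    (Δ_y : Δ (y i) = skewComul (a i) (pp i) t (y i) (y i))
    (ε_a : ε (a i) = 1) (ε_x : ε (x i) = 0) (ε_y : ε (y i) = 0) :
    (Algebra.TensorProduct.rid ℂ ℂ (H32 i)).toAlgHom.comp
      ((Algebra.TensorProduct.map (AlgHom.id ℂ (H32 i)) ε).comp Δ) = AlgHom.id ℂ (H32 i) := by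
  have ε_pp : ε (pp i) = 1 := by
    rw [pp, map_smul, map_add, map_one, ε_a]
    norm_num
  apply algHom_ext
  · simp [Δ_a, ε_a]
  · simpa [Δ_x] using rid_map_skewComul ε ε_pp ε_x _ _ _
  · simpa [Δ_y] using rid_map_skewComul ε ε_pp ε_y _ _ _

end Counit

end H32

/-- There is a unique algebra map `Δ : H(32) → H(32) ⊗ H(32)` with
`Δ(a) = a ⊗ a`, `Δ(x) = x ⊗ (p₊ + i p₋) + 1 ⊗ p₊x + a ⊗ p₋x`,
`Δ(y) = y ⊗ (p₊ - i p₋) + 1 ⊗ p₊y + a ⊗ p₋y`, and a unique algebra map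
`ε : H(32) → ℂ` with `ε(a) = 1`, `ε(x) = ε(y) = 0`; moreover they satisfy
the counit axioms. -/
theorem H32_coproduct_counit (i : ℂ) (hi : IsPrimitiveRoot i 4) :
    (∃! Δ : H32 i →ₐ[ℂ] (H32 i ⊗[ℂ] H32 i),
      Δ (H32.a i) = H32.a i ⊗ₜ[ℂ] H32.a i ∧
      Δ (H32.x i) = H32.x i ⊗ₜ[ℂ] (H32.pp i + i • H32.pm i)
        + 1 ⊗ₜ[ℂ] (H32.pp i * H32.x i) + H32.a i ⊗ₜ[ℂ] (H32.pm i * H32.x i) ∧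
      Δ (H32.y i) = H32.y i ⊗ₜ[ℂ] (H32.pp i - i • H32.pm i)
        + 1 ⊗ₜ[ℂ] (H32.pp i * H32.y i) + H32.a i ⊗ₜ[ℂ] (H32.pm i * H32.y i)) ∧
    (∃! ε : H32 i →ₐ[ℂ] ℂ,
      ε (H32.a i) = 1 ∧ ε (H32.x i) = 0 ∧ ε (H32.y i) = 0) ∧
    (∀ (Δ : H32 i →ₐ[ℂ] (H32 i ⊗[ℂ] H32 i)) (ε : H32 i →ₐ[ℂ] ℂ),
      (Δ (H32.a i) = H32.a i ⊗ₜ[ℂ] H32.a i ∧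
       Δ (H32.x i) = H32.x i ⊗ₜ[ℂ] (H32.pp i + i • H32.pm i)
        + 1 ⊗ₜ[ℂ] (H32.pp i * H32.x i) + H32.a i ⊗ₜ[ℂ] (H32.pm i * H32.x i) ∧
       Δ (H32.y i) = H32.y i ⊗ₜ[ℂ] (H32.pp i - i • H32.pm i)
        + 1 ⊗ₜ[ℂ] (H32.pp i * H32.y i) + H32.a i ⊗ₜ[ℂ] (H32.pm i * H32.y i)) →
      (ε (H32.a i) = 1 ∧ ε (H32.x i) = 0 ∧ ε (H32.y i) = 0) →
      ∀ z : H32 i,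
        (Algebra.TensorProduct.lid ℂ (H32 i))
          ((Algebra.TensorProduct.map ε (AlgHom.id ℂ (H32 i))) (Δ z)) = z ∧
        (Algebra.TensorProduct.rid ℂ ℂ (H32 i))
          ((Algebra.TensorProduct.map (AlgHom.id ℂ (H32 i)) ε) (Δ z)) = z) := by
  have hi_sq : i ^ 2 = -1 := (hi.pow four_pos (by norm_num : 4 = 2 * 2)).eq_neg_one_of_two_right
  simp only [← H32.skewComul_eq_pp_add_pm, ← H32.skewComul_neg_eq_pp_sub_pm]
  refine ⟨H32.existsUnique_algHom (H32.relations_comul hi_sq),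
    H32.existsUnique_algHom (H32.relations_counit i), ?_⟩
  rintro Δ ε ⟨Δ_a, Δ_x, Δ_y⟩ ⟨ε_a, ε_x, ε_y⟩ z
  exact ⟨DFunLike.congr_fun (H32.lid_comp_map_counit_comp_comul Δ_a Δ_x Δ_y ε_a ε_x ε_y) z,
    DFunLike.congr_fun (H32.rid_comp_map_counit_comp_comul Δ_a Δ_x Δ_y ε_a ε_x ε_y) z⟩
end
end
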